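/- Let t > 1 be an integer coprime to m, and let D ≥ 1 be an integer such that Σ_{e=1}^D (e−1)·|B_{e,L}| < q^t − q^{t/2+1} (as real numbers). Then there exists a monic irreducible polynomial g of degree t over F such that: (i) g has no roots in GF(q^m); (ii) every nonzero codeword c of C(g^{−1},t) satisfies deg c > D, and hence has Hamming weight w(c) > D/m; in particular the minimum distance of C(g^{−1},t) is greater than D/m. -/

import Mathlib

open Polynomial

noncomputable section

/-- The orbit of `j : ZMod N` under multiplication by `q`. -/
def qOrbit (N q : ℕ) (j : ZMod N) : Set (ZMod N) :=
  Set.range fun k : ℕ => (q : ZMod N) ^ k * j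

/-- The set `L` of orbits of `ZMod N` under multiplication by `q`. -/
def orbitSet (N q : ℕ) : Set (Set (ZMod N)) :=
  {l | ∃ j : ZMod N, l = qOrbit N q j}

/-- `β ^ j` for a residue class `j`. -/
def bpow {E : Type*} [Monoid E] {N : ℕ} (β : E) (j : ZMod N) : E :=
  β ^ j.val

/-- The check-matrix entry `h_{i l} = ∑_{j ∈ l} ρ(β^j) β^{i j}`, as an element of `E`. -/
def hEntry {F E : Type*} [CommSemiring F] [CommSemiring E] [Algebra F E] {N : ℕ}
    (β : E) (ρ : Polynomial F) (i : ℕ) (l : Set (ZMod N)) : E :=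
  ∑ᶠ j ∈ l, Polynomial.aeval (bpow β j) ρ * bpow β j ^ i

/-- The code `C(ρ, t)` inside `F^L`. -/
def codeSet (F E : Type*) [Field F] [Field E] [Algebra F E] (N q : ℕ)
    (β : E) (ρ : Polynomial F) (t : ℕ) : Set (↥(orbitSet N q) → F) :=
  {c | ∀ i < t, ∑ᶠ l : orbitSet N q,
    algebraMap F E (c l) * hEntry β ρ i (l : Set (ZMod N)) = 0}

open scoped Classical in
/-- `deg c = ∑_{l : c_l ≠ 0} |l|`. -/
def wdeg {F : Type*} [Zero F] {N q : ℕ} (c : ↥(orbitSet N q) → F) : ℕ :=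
  ∑ᶠ l : orbitSet N q, if c l ≠ 0 then (l : Set (ZMod N)).ncard else 0

/-- The set `B_{d,L}` of words of degree `d`. -/
def Bset (F : Type*) [Field F] (N q d : ℕ) : Set (↥(orbitSet N q) → F) :=
  {r | wdeg r = d}

/-- The numerator of `∑ j ∈ s, v j / (X - b j)` over the denominator `∏ j ∈ s, (X - b j)`. -/
def fracNumerator {ι E : Type*} [DecidableEq ι] [CommRing E] (s : Finset ι) (v b : ι → E) :
    E[X] :=
  ∑ j ∈ s, C (v j) * ∏ k ∈ s.erase j, (X - C (b k))

theorem natDegree_fracNumerator_le {ι E : Type*} [DecidableEq ι] [Field E] (s : Finset ι)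
    (v b : ι → E) : (fracNumerator s v b).natDegree ≤ s.card - 1 := by
  refine natDegree_sum_le_of_forall_le _ _ fun j hj => ?_
  refine (natDegree_C_mul_le _ _).trans ?_
  rw [natDegree_prod_of_monic _ _ fun k _ => monic_X_sub_C _]
  simp [Finset.card_erase_of_mem hj]

theorem fracNumerator_ne_zero {ι E : Type*} [DecidableEq ι] [Field E] {s : Finset ι}
    {v b : ι → E} (hb : Function.Injective b) (hs : s.Nonempty) (hv : ∀ j ∈ s, v j ≠ 0) :
    fracNumerator s v b ≠ 0 := by
  obtain ⟨j, hj⟩ := hs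
  intro h
  have h0 : (fracNumerator s v b).eval (b j) = v j * ∏ k ∈ s.erase j, (b j - b k) := by
    rw [fracNumerator, eval_finsetSum, Finset.sum_eq_single_of_mem j hj]
    · simp [eval_prod]
    · intro i _ hij
      simp only [eval_mul, eval_C, eval_prod, eval_sub, eval_X]
      rw [Finset.prod_eq_zero (Finset.mem_erase.2 ⟨hij.symm, hj⟩) (sub_self _), mul_zero]
  rw [h, eval_zero] at h0
  refine mul_ne_zero (hv j hj) (Finset.prod_ne_zero_iff.2 fun k hk => ?_) h0.symm
  exact sub_ne_zero.2 fun e => Finset.ne_of_mem_erase hk (hb e.symm)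

theorem aeval_fracNumerator {ι E K : Type*} [DecidableEq ι] [Field E] [Field K] [Algebra E K]
    (s : Finset ι) (v b : ι → E) (a : K) (ha : ∀ j ∈ s, a ≠ algebraMap E K (b j)) :
    aeval a (fracNumerator s v b) = (∏ j ∈ s, (a - algebraMap E K (b j))) *
      ∑ j ∈ s, algebraMap E K (v j) * (a - algebraMap E K (b j))⁻¹ := by
  rw [fracNumerator, map_sum, Finset.mul_sum]
  refine Finset.sum_congr rfl fun j hj => ?_
  have hne := sub_ne_zero.2 (ha j hj)
  rw [← Finset.mul_prod_erase s _ hj]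
  simp only [map_mul, map_prod, map_sub, aeval_X, aeval_C]
  field_simp

theorem aeval_sub_aeval_eq_sum {R A : Type*} [CommRing R] [CommRing A] [Algebra R A]
    (g : R[X]) (a b : A) :
    aeval b g - aeval a g = (b - a) * ∑ n ∈ Finset.range (g.natDegree + 1),
      ∑ i ∈ Finset.range n, algebraMap R A (g.coeff n) * a ^ (n - 1 - i) * b ^ i := by
  rw [aeval_eq_sum_range, aeval_eq_sum_range, ← Finset.sum_sub_distrib, Finset.mul_sum]
  refine Finset.sum_congr rfl fun n _ => ?_
  rw [← smul_sub, ← (Commute.all b a).geom_sum₂_mul, Algebra.smul_def, Finset.sum_mul,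
    Finset.mul_sum, Finset.mul_sum]
  refine Finset.sum_congr rfl fun i _ => ?_
  ring

/-- If `∑ j ∈ s, v j * b j ^ i / g (b j)` vanishes for `i < deg g`, then every root of `g`
is a root of the numerator of `∑ j ∈ s, v j / (X - b j)`. -/
theorem aeval_fracNumerator_eq_zero {ι F E K : Type*} [DecidableEq ι] [Field F] [Field E]
    [Field K] [Algebra F E] [Algebra E K] [Algebra F K] [IsScalarTower F E K]
    (s : Finset ι) (v b h : ι → E) (g : F[X])
    (hh : ∀ j ∈ s, aeval (b j) g * h j = 1)
    (hsum : ∀ i < g.natDegree, ∑ j ∈ s, v j * (h j * b j ^ i) = 0) {a : K}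
    (ha : aeval a g = 0) : aeval a (fracNumerator s v b) = 0 := by
  have hmap : ∀ j, aeval (algebraMap E K (b j)) g = algebraMap E K (aeval (b j) g) :=
    fun j => aeval_algebraMap_apply K (b j) g
  have hne : ∀ j ∈ s, a ≠ algebraMap E K (b j) := by
    rintro j hj rfl
    rw [hmap, map_eq_zero] at ha
    have := hh j hj
    simp [ha] at this
  rw [aeval_fracNumerator s v b a hne]
  convert mul_zero _
  have key : ∀ j ∈ s, (a - algebraMap E K (b j))⁻¹ = -∑ n ∈ Finset.range (g.natDegree + 1),
      ∑ i ∈ Finset.range n, algebraMap F K (g.coeff n) * a ^ (n - 1 - i) *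
        algebraMap E K (h j * b j ^ i) := by
    intro j hj
    have h1 := aeval_sub_aeval_eq_sum g a (algebraMap E K (b j))
    have h2 : algebraMap E K (aeval (b j) g) * algebraMap E K (h j) = 1 := by
      rw [← map_mul, hh j hj, map_one]
    rw [ha, hmap, sub_zero] at h1
    have h3 := sub_ne_zero.2 (hne j hj)
    refine inv_eq_of_mul_eq_one_right ?_
    rw [← h2, h1, mul_assoc, Finset.sum_mul, mul_neg, ← neg_mul, neg_sub]
    congr 1
    refine Finset.sum_congr rfl fun n _ => ?_
    rw [Finset.sum_mul]
    refine Finset.sum_congr rfl fun i _ => ?_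
    simp only [map_mul, map_pow]
    ring
  calc ∑ j ∈ s, algebraMap E K (v j) * (a - algebraMap E K (b j))⁻¹
      = -∑ n ∈ Finset.range (g.natDegree + 1), ∑ i ∈ Finset.range n,
          algebraMap F K (g.coeff n) * a ^ (n - 1 - i) *
            algebraMap E K (∑ j ∈ s, v j * (h j * b j ^ i)) := by
        rw [Finset.sum_congr rfl fun j hj => by rw [key j hj, mul_neg], Finset.sum_neg_distrib]
        simp only [Finset.mul_sum, map_sum]
        rw [Finset.sum_comm]
        congr 1
        refine Finset.sum_congr rfl fun n _ => ?_
        rw [Finset.sum_comm]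
        refine Finset.sum_congr rfl fun i _ => Finset.sum_congr rfl fun j _ => ?_
        simp only [map_mul, map_pow]
        ring
    _ = 0 := by
        rw [neg_eq_zero]
        refine Finset.sum_eq_zero fun n hn => Finset.sum_eq_zero fun i hi => ?_
        rw [hsum i (by simp only [Finset.mem_range] at hn hi; omega), map_zero, mul_zero]

theorem self_mem_qOrbit (N q : ℕ) (j : ZMod N) : j ∈ qOrbit N q j :=
  ⟨0, by simp⟩

theorem qOrbit_eq_of_mem {N q m : ℕ} (hm : 0 < m) (hq : (q : ZMod N) ^ m = 1) {i j : ZMod N}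
    (h : i ∈ qOrbit N q j) : qOrbit N q i = qOrbit N q j := by
  obtain ⟨k, rfl⟩ := h
  ext x
  constructor
  · rintro ⟨n, rfl⟩
    exact ⟨n + k, by simp [pow_add, mul_assoc]⟩
  · rintro ⟨n, rfl⟩
    refine ⟨n + (m - 1) * k, ?_⟩
    have : (q : ZMod N) ^ ((m - 1) * k) * (q : ZMod N) ^ k = 1 := by
      rw [← pow_add, ← Nat.succ_mul, Nat.succ_eq_add_one, Nat.sub_add_cancel hm, pow_mul, hq,
        one_pow]
    simp only [pow_add]
    linear_combination (q : ZMod N) ^ n * j * this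

theorem ncard_qOrbit_le {N q m : ℕ} (hm : 0 < m) (hq : (q : ZMod N) ^ m = 1) (j : ZMod N) :
    (qOrbit N q j).ncard ≤ m := by
  classical
  have : qOrbit N q j ⊆
      ((Finset.range m).image fun k => (q : ZMod N) ^ k * j : Finset (ZMod N)) := by
    rintro _ ⟨k, rfl⟩
    simp only [Finset.coe_image, Set.mem_image, Finset.coe_range, Set.mem_Iio]
    exact ⟨k % m, Nat.mod_lt _ hm, by rw [← pow_eq_pow_mod k hq]⟩
  refine (Set.ncard_le_ncard this (Finset.finite_toSet _)).trans ?_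
  rw [Set.ncard_coe_finset]
  exact Finset.card_image_le.trans (Finset.card_range m).le

/-- The orbit of a residue class, as an element of the set of orbits. -/
def toOrbit (N q : ℕ) (j : ZMod N) : orbitSet N q :=
  ⟨qOrbit N q j, j, rfl⟩

theorem toOrbit_eq_iff {N q m : ℕ} (hm : 0 < m) (hq : (q : ZMod N) ^ m = 1) (j : ZMod N)
    (l : orbitSet N q) : toOrbit N q j = l ↔ j ∈ (l : Set (ZMod N)) := by
  obtain ⟨_, i, rfl⟩ := l
  refine ⟨fun h => ?_, fun h => Subtype.ext (qOrbit_eq_of_mem hm hq h)⟩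
  have h' : qOrbit N q j = qOrbit N q i := congrArg Subtype.val h
  change j ∈ qOrbit N q i
  rw [← h']
  exact self_mem_qOrbit N q j

theorem finsum_orbitSet_eq_sum {N q m : ℕ} [NeZero N] {M : Type*} [AddCommMonoid M]
    (hm : 0 < m) (hq : (q : ZMod N) ^ m = 1) (f : orbitSet N q → ZMod N → M) :
    ∑ᶠ l : orbitSet N q, ∑ᶠ j ∈ (l : Set (ZMod N)), f l j =
      ∑ j : ZMod N, f (toOrbit N q j) j := by
  classical
  have : Fintype (orbitSet N q) := Fintype.ofFinite _
  rw [finsum_eq_sum_of_fintype, ← Finset.sum_fiberwise _ (toOrbit N q)]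
  refine Finset.sum_congr rfl fun l _ => ?_
  rw [finsum_mem_eq_toFinset_sum]
  refine Finset.sum_congr ?_ fun j hj => ?_
  · ext j
    simp [toOrbit_eq_iff hm hq]
  · rw [(toOrbit_eq_iff hm hq j l).2 (by simpa [toOrbit_eq_iff hm hq] using hj)]

open scoped Classical in
/-- The residue classes whose orbit lies in the support of `c`. -/
def classSupport {F : Type*} [Zero F] {N q : ℕ} [NeZero N] (c : orbitSet N q → F) :
    Finset (ZMod N) :=
  {j | c (toOrbit N q j) ≠ 0}

theorem card_classSupport {F : Type*} [Zero F] {N q m : ℕ} [NeZero N] (hm : 0 < m)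
    (hq : (q : ZMod N) ^ m = 1) (c : orbitSet N q → F) : (classSupport c).card = wdeg c := by
  classical
  rw [classSupport, Finset.card_filter,
    ← finsum_orbitSet_eq_sum hm hq fun l _ => if c l ≠ 0 then 1 else 0, wdeg]
  refine finsum_congr fun l => ?_
  rw [finsum_mem_eq_finite_toFinset_sum _ (Set.toFinite _), Finset.sum_const,
    ← Set.ncard_eq_toFinset_card]
  simp

theorem classSupport_nonempty {F : Type*} [Zero F] {N q : ℕ} [NeZero N] {c : orbitSet N q → F}
    (hc : c ≠ 0) : (classSupport c).Nonempty := by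
  classical
  obtain ⟨⟨_, j, rfl⟩, hl⟩ := Function.ne_iff.1 hc
  exact ⟨j, Finset.mem_filter.2 ⟨Finset.mem_univ j, hl⟩⟩

theorem wdeg_le_mul_ncard {F : Type*} [Zero F] {N q m : ℕ} [NeZero N] (hm : 0 < m)
    (hq : (q : ZMod N) ^ m = 1) (c : orbitSet N q → F) :
    wdeg c ≤ m * {l : orbitSet N q | c l ≠ 0}.ncard := by
  classical
  have : Fintype (orbitSet N q) := Fintype.ofFinite _
  rw [wdeg, finsum_eq_sum_of_fintype, ← Finset.sum_filter, Set.ncard_eq_toFinset_card', mul_comm,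
    ← smul_eq_mul]
  simp only [Set.toFinset_ofPred]
  refine Finset.sum_le_card_nsmul _ _ _ fun l _ => ?_
  obtain ⟨_, j, rfl⟩ := l
  exact ncard_qOrbit_le hm hq j

theorem bpow_injective {E : Type*} [Monoid E] {N : ℕ} [NeZero N] {β : E} (hβ : orderOf β = N) :
    Function.Injective (bpow β : ZMod N → E) := by
  intro i j h
  refine ZMod.val_injective N (pow_injOn_Iio_orderOf ?_ ?_ h) <;> simp [hβ, ZMod.val_lt]

/-- At most `q ^ (t / 2 + 1)` elements of an extension of degree `t` have smaller degree. -/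
theorem card_filter_natDegree_minpoly_ne_le (F K : Type*) [Field F] [Field K] [Fintype F]
    [Fintype K] [Algebra F K] :
    (Finset.univ.filter fun x : K =>
      (minpoly F x).natDegree ≠ Module.finrank F K).card ≤
        Fintype.card F ^ (Module.finrank F K / 2 + 1) := by
  classical
  set q := Fintype.card F
  set t := Module.finrank F K
  have hq : 1 < q := Fintype.one_lt_card
  have hsub : (Finset.univ.filter fun x : K => (minpoly F x).natDegree ≠ t) ⊆
      (Finset.Icc 1 (t / 2)).biUnion fun d => (X ^ q ^ d - X : K[X]).roots.toFinset := by
    intro x hx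
    rw [Finset.mem_filter] at hx
    have hint : IsIntegral F x := Algebra.IsIntegral.isIntegral x
    have hpos := minpoly.natDegree_pos hint
    obtain ⟨k, hk⟩ : (minpoly F x).natDegree ∣ t := minpoly.degree_dvd hint
    have ht : 0 < t := Module.finrank_pos
    have hk2 : 2 ≤ k := by
      rcases k with _ | _ | k
      · omega
      · exact absurd (by simpa using hk.symm) hx.2
      · omega
    simp only [Finset.mem_biUnion, Finset.mem_Icc, Multiset.mem_toFinset]
    refine ⟨(minpoly F x).natDegree, ⟨hpos, ?_⟩, ?_⟩
    · rw [Nat.le_div_iff_mul_le two_pos, hk]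
      exact Nat.mul_le_mul_left _ hk2
    · have hdvd := ((minpoly.irreducible hint).natDegree_dvd_iff_dvd_X_pow_card_pow_sub_X).1
        dvd_rfl
      have := aeval_eq_zero_of_dvd_aeval_eq_zero hdvd (minpoly.aeval F x)
      rw [mem_roots (FiniteField.X_pow_card_pow_sub_X_ne_zero K hpos.ne' hq)]
      simpa [q, Nat.card_eq_fintype_card] using this
  refine (Finset.card_le_card hsub).trans (Finset.card_biUnion_le.trans ?_)
  refine (Finset.sum_le_sum (g := fun d => q ^ d) fun d hd => ?_).trans
    (Nat.geomSum_lt hq fun d hd => ?_).le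
  · have hd' : d ≠ 0 := by simp only [Finset.mem_Icc] at hd; omega
    refine (Multiset.toFinset_card_le _).trans ((card_roots' _).trans ?_)
    rw [FiniteField.X_pow_card_pow_sub_X_natDegree_eq K hd' hq]
  · simp only [Finset.mem_Icc] at hd; omega

/-- A degree-`t` extension of `F` has an element of degree `t` that is a root of no `P c` with
`c` nonzero of degree at most `D`. -/
theorem exists_generator_avoiding {F E K Ω : Type*} [Field F] [Field E] [Field K] [Field Ω]
    [Fintype F] [Fintype K] [Algebra F K] [Algebra F Ω] [Algebra E Ω] {N q t D : ℕ} [NeZero N]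
    (hF : Fintype.card F = q) (hK : Module.finrank F K = t) (φ : K →ₐ[F] Ω)
    (P : (orbitSet N q → F) → E[X]) (hdeg : ∀ c, (P c).natDegree ≤ wdeg c - 1)
    (hP : ∀ c, c ≠ 0 → P c ≠ 0)
    (hsum : ∑ e ∈ Finset.Icc 1 D, ((e : ℝ) - 1) * ((Bset F N q e).ncard : ℝ) <
      (q : ℝ) ^ t - (q : ℝ) ^ ((t : ℝ) / 2 + 1)) :
    ∃ x : K, (minpoly F x).natDegree = t ∧
      ∀ c, c ≠ 0 → wdeg c ≤ D → 0 < wdeg c → aeval (φ x) (P c) ≠ 0 := by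
  classical
  have : Fintype (orbitSet N q) := Fintype.ofFinite _
  let bad : (orbitSet N q → F) → Finset K := fun c =>
    Finset.univ.filter fun x => c ≠ 0 ∧ aeval (φ x) (P c) = 0
  have hbad : ∀ c, (bad c).card ≤ wdeg c - 1 := by
    intro c
    by_cases hc : c = 0
    · simp [bad, hc]
    refine le_trans ?_ (hdeg c)
    refine le_trans ?_ ((card_roots' ((P c).map (algebraMap E Ω))).trans natDegree_map_le)
    refine le_trans ?_ (Multiset.toFinset_card_le _)
    refine Finset.card_le_card_of_injOn φ (fun x hx => ?_) φ.injective.injOn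
    have hx' : aeval (φ x) (P c) = 0 := by
      simpa [bad, hc] using hx
    simpa [mem_roots', hP c hc, eval_map_algebraMap, aeval_def] using hx'
  let small : Finset K := Finset.univ.filter fun x => (minpoly F x).natDegree ≠ t
  have hsmall : (small.card : ℝ) ≤ (q : ℝ) ^ ((t : ℝ) / 2 + 1) := by
    have h1 := card_filter_natDegree_minpoly_ne_le F K
    rw [hK, hF] at h1
    have hq : (1 : ℝ) ≤ q := by
      rw [← hF]; exact_mod_cast Fintype.card_pos
    calc (small.card : ℝ) ≤ (q : ℝ) ^ (t / 2 + 1) := by exact_mod_cast h1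
      _ = (q : ℝ) ^ (((t / 2 + 1 : ℕ) : ℝ)) := (Real.rpow_natCast _ _).symm
      _ ≤ _ := Real.rpow_le_rpow_of_exponent_le hq (by
        push_cast
        gcongr
        exact Nat.cast_div_le)
  let words : Finset K := (Finset.Icc 1 D).biUnion fun e =>
    (Bset F N q e).toFinset.biUnion bad
  have hwords : (words.card : ℝ) ≤
      ∑ e ∈ Finset.Icc 1 D, ((e : ℝ) - 1) * ((Bset F N q e).ncard : ℝ) := by
    refine (Nat.cast_le.2 Finset.card_biUnion_le).trans ?_
    rw [Nat.cast_sum]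
    refine Finset.sum_le_sum fun e he => ?_
    have h1 : ((Bset F N q e).toFinset.biUnion bad).card ≤
        (Bset F N q e).toFinset.card * (e - 1) :=
      Finset.card_biUnion_le_card_mul _ _ _ fun c hc => by
        have hmem : c ∈ Bset F N q e := Set.mem_toFinset.1 hc
        have hc' : wdeg c = e := hmem
        exact hc' ▸ hbad c
    rw [← Nat.cast_one, ← Nat.cast_sub (Finset.mem_Icc.1 he).1, Set.ncard_eq_toFinset_card',
      mul_comm]
    exact_mod_cast h1
  have hcard : (small ∪ words).card < Fintype.card K := by
    rw [Module.card_eq_pow_finrank (K := F), hF, hK]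
    have h1 : ((small ∪ words).card : ℝ) ≤ small.card + words.card := by
      exact_mod_cast Finset.card_union_le small words
    have h2 : ((small ∪ words).card : ℝ) < (q : ℝ) ^ t := by linarith
    exact_mod_cast h2
  obtain ⟨x, hx⟩ : ∃ x, x ∉ small ∪ words := by
    by_contra! h
    exact hcard.ne (Finset.card_eq_iff_eq_univ _ |>.2 (Finset.eq_univ_iff_forall.2 h))
  rw [Finset.notMem_union] at hx
  refine ⟨x, by simpa [small] using hx.1, fun c hc hD hpos h0 => hx.2 ?_⟩
  simp only [words, Finset.mem_biUnion, Finset.mem_Icc, Set.mem_toFinset]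
  exact ⟨wdeg c, ⟨hpos, hD⟩, c, rfl, by simp [bad, hc, h0]⟩

/-- Existence theorem: if `t > 1` is coprime to `m` and
`∑_{e=1}^D (e−1)|B_{e,L}| < q^t − q^{t/2+1}`, then there is a monic irreducible `g` of
degree `t` over `F` with no roots in `GF(q^m)` such that every nonzero codeword `c` of
`C(g⁻¹,t)` has `deg c > D`, hence Hamming weight `w(c) > D/m`; in particular the minimum
distance of `C(g⁻¹,t)` exceeds `D/m`. -/
theorem existence_gilbert (q m : ℕ) (hm : 0 < m) (hqm : Nat.Coprime q m)
    (F E : Type*) [Field F] [Field E] [Fintype F] [Fintype E] [Algebra F E]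
    (hF : Fintype.card F = q) (hE : Fintype.card E = q ^ m)
    (β : E) (hβ : orderOf β = q ^ m - 1) (t : ℕ) (ht : 1 < t) (htm : Nat.Coprime t m)
    (D : ℕ) (hD : 0 < D)
    (hsum : ∑ e ∈ Finset.Icc 1 D,
        ((e : ℝ) - 1) * ((Bset F (q ^ m - 1) q e).ncard : ℝ) <
      (q : ℝ) ^ t - (q : ℝ) ^ ((t : ℝ) / 2 + 1)) :
    ∃ g : Polynomial F, g.Monic ∧ Irreducible g ∧ g.natDegree = t ∧
      (∀ x : E, Polynomial.aeval x g ≠ 0) ∧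
      ∀ ginv : Polynomial F, ginv.degree < ((q ^ m - 1 : ℕ) : WithBot ℕ) →
        ((X : Polynomial F) ^ (q ^ m - 1) - 1 ∣ g * ginv - 1) →
        ∀ c ∈ codeSet F E (q ^ m - 1) q β ginv t, c ≠ 0 →
          D < wdeg c ∧
          (D : ℝ) / m < (({l : ↥(orbitSet (q ^ m - 1) q) | c l ≠ 0}).ncard : ℝ) := by
  classical
  have hq : 1 < q := hF ▸ Fintype.one_lt_card
  have hE1 : 1 < q ^ m := Nat.one_lt_pow hm.ne' hq
  set N := q ^ m - 1 with hN
  have : NeZero N := ⟨by omega⟩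
  have hqN : (q : ZMod N) ^ m = 1 := by
    have : ((N + 1 : ℕ) : ZMod N) = 1 := by simp
    rwa [hN, Nat.sub_add_cancel hE1.le, Nat.cast_pow] at this
  let v : (orbitSet N q → F) → ZMod N → E := fun c j => algebraMap F E (c (toOrbit N q j))
  let P : (orbitSet N q → F) → E[X] := fun c =>
    fracNumerator (classSupport c) (v c) (bpow β)
  have hPdeg : ∀ c, (P c).natDegree ≤ wdeg c - 1 := fun c =>
    card_classSupport hm hqN c ▸ natDegree_fracNumerator_le _ _ _
  have hP0 : ∀ c, c ≠ 0 → P c ≠ 0 := fun c hc =>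
    fracNumerator_ne_zero (bpow_injective hβ) (classSupport_nonempty hc) fun j hj => by
      simpa [v, classSupport] using hj
  obtain ⟨p, hp⟩ := CharP.exists F
  have : Fact p.Prime := ⟨CharP.char_is_prime F p⟩
  have : NeZero t := ⟨by omega⟩
  let K := FiniteField.Extension F p t
  have : Finite K := Module.finite_of_finite F
  have : Fintype K := Fintype.ofFinite K
  have hKt : Module.finrank F K = t := FiniteField.finrank_extension F p t
  let φ : K →ₐ[F] AlgebraicClosure E := IsAlgClosed.lift
  obtain ⟨x, hxt, hxP⟩ : ∃ x : K, (minpoly F x).natDegree = t ∧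
      ∀ c, c ≠ 0 → wdeg c ≤ D → 0 < wdeg c → aeval (φ x) (P c) ≠ 0 :=
    exists_generator_avoiding hF hKt φ P hPdeg hP0 hsum
  have hint : IsIntegral F x := Algebra.IsIntegral.isIntegral x
  have hroot : ∀ y : E, aeval y (minpoly F x) ≠ 0 := by
    intro y hy
    have h1 := minpoly.eq_of_irreducible_of_monic (minpoly.irreducible hint) hy
      (minpoly.monic hint)
    have h2 : (minpoly F y).natDegree ∣ Module.finrank F E :=
      minpoly.degree_dvd (Algebra.IsIntegral.isIntegral y)
    have h3 : Module.finrank F E = m := by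
      have := Module.card_eq_pow_finrank (K := F) (V := E)
      rw [hE, hF] at this
      exact (Nat.pow_right_injective hq this).symm
    rw [← h1, hxt, h3] at h2
    exact ht.ne' (Nat.Coprime.eq_one_of_dvd htm h2)
  refine ⟨minpoly F x, minpoly.monic hint, minpoly.irreducible hint, hxt, hroot, ?_⟩
  intro ginv _ hdvd c hc hc0
  have hpos : 0 < wdeg c := by
    rw [← card_classSupport hm hqN c]
    exact (classSupport_nonempty hc0).card_pos
  have hD : D < wdeg c := by
    by_contra! hle
    refine hxP c hc0 hle hpos (aeval_fracNumerator_eq_zero (F := F) _ _ _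
      (fun j => aeval (bpow β j) ginv) (minpoly F x) (fun j _ => ?_) (fun i hi => ?_) ?_)
    · have h1 : aeval (bpow β j) ((X : F[X]) ^ N - 1) = 0 := by
        rw [map_sub, map_pow, aeval_X, map_one, bpow, ← pow_mul, mul_comm, pow_mul,
          orderOf_dvd_iff_pow_eq_one.1 hβ.dvd, one_pow, sub_self]
      have h2 := aeval_eq_zero_of_dvd_aeval_eq_zero hdvd h1
      simpa [sub_eq_zero] using h2
    · have h1 := hc i (hxt ▸ hi)
      simp only [hEntry, mul_finsum_mem] at h1
      rw [finsum_orbitSet_eq_sum hm hqN fun l j => algebraMap F E (c l) *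
        (aeval (bpow β j) ginv * bpow β j ^ i)] at h1
      rw [← h1]
      refine Finset.sum_subset (Finset.subset_univ _) fun j _ hj => ?_
      have hj' : c (toOrbit N q j) = 0 := by simpa [classSupport] using hj
      simp [v, hj']
    · rw [aeval_algHom_apply, minpoly.aeval, map_zero]
  refine ⟨hD, ?_⟩
  rw [div_lt_iff₀ (by exact_mod_cast hm), mul_comm]
  exact_mod_cast hD.trans_le (wdeg_le_mul_ncard hm hqN c)
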